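/- Let G = (V,E) be a finite simple undirected graph on n vertices with at least one edge, let β > 1 be a real number, set γ = β·α(G), and let D be an orientation of G satisfying: for every vertex w, the number of valid outgoing edges of w is at least min{d⁺(w), γ}. Let r ∈ V, let i ≥ 1 be an integer with d⁺(r) > γ + i, and for 1 ≤ j ≤ i let V_j denote the set of vertices reachable from r by directed paths of length at most j that use only valid edges (with r ∈ V_j). Then |V_j| > β^j for every 1 ≤ j ≤ i. -/

import Mathlib

open Finset

structure GraphOrientation {V : Type*} [Fintype V] [DecidableEq V] (G : SimpleGraph V) where
  dir : V → V → Bool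
  dir_iff : ∀ u v, G.Adj u v ↔ (dir u v ∨ dir v u)
  asymm : ∀ u v, dir u v → ¬ dir v u

namespace GraphOrientation
variable {V : Type*} [Fintype V] [DecidableEq V] {G : SimpleGraph V}

/-- The out-degree of `u` under orientation `D`. -/
def outDeg (D : GraphOrientation G) (u : V) : ℕ :=
  (Finset.univ.filter fun v => D.dir u v).card

/-- The maximum out-degree `Δ` of the orientation. -/
def maxOutDeg (D : GraphOrientation G) : ℕ :=
  Finset.univ.sup D.outDeg

/-- The edge oriented `u → v` is valid: `d⁺(u) ≤ d⁺(v) + 1`. -/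
def Valid (D : GraphOrientation G) (u v : V) : Prop :=
  D.dir u v ∧ D.outDeg u ≤ D.outDeg v + 1

instance (D : GraphOrientation G) (u : V) : DecidablePred (D.Valid u) := by
  unfold Valid; infer_instance

end GraphOrientation

/-- The set `E(U)` of edges of `G` with both endpoints in `U`. -/
def edgesIn {V : Type*} [Fintype V] [DecidableEq V] (G : SimpleGraph V)
    [DecidableRel G.Adj] (U : Finset V) : Finset (Sym2 V) :=
  G.edgeFinset ∩ U.sym2

/-- The arboricity `α(G) = max_{U ⊆ V, |U| ≥ 2} ⌈|E(U)|/(|U|-1)⌉`. -/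
def arboricity {V : Type*} [Fintype V] [DecidableEq V] (G : SimpleGraph V)
    [DecidableRel G.Adj] : ℕ :=
  Finset.univ.sup fun U : Finset V =>
    if 2 ≤ U.card then ⌈((edgesIn G U).card : ℚ) / ((U.card : ℚ) - 1)⌉₊ else 0

/-- The set of vertices reachable from `r` by directed paths of length at most `j` all of
whose edges are valid (it contains `r` itself, via the empty path). -/
def reachSet {V : Type*} [Fintype V] [DecidableEq V] {G : SimpleGraph V}
    (D : GraphOrientation G) (r : V) (j : ℕ) : Set V :=
  {x | ∃ (k : ℕ) (w : ℕ → V), k ≤ j ∧ w 0 = r ∧ w k = x ∧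
    ∀ l < k, D.Valid (w l) (w (l + 1))}

/-!
Put `α = α(G)`. If `A ⊆ B` with `B` nonempty, and every vertex of `A` has at least `β α`
out-neighbours in `B`, then `β α |A| ≤ |E(B)| ≤ α (|B| - 1)`, so that `|B| ≥ β |A| + 1`. The
out-degree drops by at most one along a valid edge, so if `d⁺(r) ≥ γ + j` with `γ = β α`, every
vertex of `V_j` has out-degree at least `γ` and hence at least `γ` valid out-edges. These end in
`V_{j+1}`, so `|V_{j+1}| ≥ β |V_j| + 1`, which iterates to `|V_j| ≥ 1 + β + ⋯ + β ^ j`.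
-/

theorem pow_lt_geom_sum {R : Type*} [Semiring R] [PartialOrder R] [IsStrictOrderedRing R]
    {a : R} {n : ℕ} (ha : 0 ≤ a) (hn : n ≠ 0) : a ^ n < ∑ k ∈ range (n + 1), a ^ k := by
  rw [sum_range_succ]
  exact lt_add_of_pos_left _ (geom_sum_pos ha hn)

section Arboricity
variable {V : Type*} [Fintype V] [DecidableEq V] (G : SimpleGraph V) [DecidableRel G.Adj]

theorem edgesIn_eq_empty {U : Finset V} (hU : #U ≤ 1) : edgesIn G U = ∅ := by
  refine eq_empty_of_forall_notMem fun e he => ?_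
  induction e with
  | _ x y =>
    simp only [edgesIn, mem_inter, SimpleGraph.mem_edgeFinset, SimpleGraph.mem_edgeSet,
      mk_mem_sym2_iff] at he
    exact he.1.ne (card_le_one.mp hU x he.2.1 y he.2.2)

theorem card_edgesIn_le (U : Finset V) : #(edgesIn G U) ≤ arboricity G * (#U - 1) := by
  rcases Nat.lt_or_ge #U 2 with hU | hU
  · simp [edgesIn_eq_empty G (Nat.le_of_lt_succ hU)]
  · have hceil : ⌈(#(edgesIn G U) : ℚ) / ((#U : ℚ) - 1)⌉₊ ≤ arboricity G := by
      simpa only [arboricity, if_pos hU] using le_sup (f := fun U : Finset V =>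
        if 2 ≤ #U then ⌈(#(edgesIn G U) : ℚ) / ((#U : ℚ) - 1)⌉₊ else 0) (mem_univ U)
    have hpos : (0 : ℚ) < #U - 1 := sub_pos.mpr (by exact_mod_cast hU)
    have hmul : (#(edgesIn G U) : ℚ) ≤ arboricity G * (#U - 1) :=
      (div_le_iff₀ hpos).mp (Nat.ceil_le.mp hceil)
    rw [← Nat.cast_pred (by omega)] at hmul
    exact_mod_cast hmul

theorem arboricity_pos (hE : G.edgeSet.Nonempty) : 0 < arboricity G := by
  have hcard : 0 < #(edgesIn G univ) := by
    simpa [edgesIn, card_pos] using hE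
  exact Nat.pos_of_mul_pos_right (hcard.trans_le (card_edgesIn_le G univ))

end Arboricity

namespace GraphOrientation
variable {V : Type*} [Fintype V] [DecidableEq V] {G : SimpleGraph V} (D : GraphOrientation G)
  {r u x : V} {j : ℕ} {β : ℝ}

section EdgeCounting
variable [DecidableRel G.Adj] {A B : Finset V}

theorem sum_card_dir_eq_card_edgesIn (U : Finset V) :
    ∑ u ∈ U, #{x ∈ U | D.dir u x} = #(edgesIn G U) := by
  rw [← card_sigma]
  refine card_bij (fun p _ => s(p.1, p.2)) ?mem ?inj ?surj
  case mem =>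
    rintro ⟨u, x⟩ hp
    simp only [mem_sigma, mem_filter] at hp
    simp [edgesIn, D.dir_iff, hp]
  case inj =>
    rintro ⟨u, x⟩ hp ⟨v, y⟩ hq h
    simp only [mem_sigma, mem_filter] at hp hq
    rcases Sym2.eq_iff.mp h with ⟨rfl, rfl⟩ | ⟨rfl, rfl⟩
    · rfl
    · exact absurd hq.2.2 (D.asymm _ _ hp.2.2)
  case surj =>
    intro e he
    induction e with
    | _ x y =>
      simp only [edgesIn, mem_inter, SimpleGraph.mem_edgeFinset, SimpleGraph.mem_edgeSet,
        mk_mem_sym2_iff] at he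
      obtain ⟨hxy, hx, hy⟩ := he
      rcases (D.dir_iff x y).mp hxy with h | h
      · exact ⟨⟨x, y⟩, by simp [hx, hy, h], rfl⟩
      · exact ⟨⟨y, x⟩, by simp [hx, hy, h], Sym2.eq_swap⟩

theorem mul_card_add_one_le_card (hE : G.edgeSet.Nonempty) (hB : B.Nonempty) (hAB : A ⊆ B)
    (hdeg : ∀ u ∈ A, β * arboricity G ≤ #{x ∈ B | D.dir u x}) : β * #A + 1 ≤ #B := by
  have hlower : #A * (β * arboricity G) ≤ #(edgesIn G B) := by
    calc #A * (β * arboricity G)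
        ≤ ∑ u ∈ A, (#{x ∈ B | D.dir u x} : ℝ) := by
          simpa only [nsmul_eq_mul] using card_nsmul_le_sum A _ _ hdeg
      _ ≤ ∑ u ∈ B, (#{x ∈ B | D.dir u x} : ℝ) :=
          sum_le_sum_of_subset_of_nonneg hAB fun _ _ _ => Nat.cast_nonneg _
      _ = #(edgesIn G B) := by exact_mod_cast D.sum_card_dir_eq_card_edgesIn B
  have hupper : (#(edgesIn G B) : ℝ) ≤ arboricity G * (#B - 1) := by
    rw [← Nat.cast_pred hB.card_pos]
    exact_mod_cast card_edgesIn_le G B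
  have hα : (0 : ℝ) < arboricity G := by exact_mod_cast arboricity_pos G hE
  refine le_of_mul_le_mul_left ?_ hα
  linarith

end EdgeCounting

section Reachability

theorem self_mem_reachSet (r : V) (j : ℕ) : r ∈ reachSet D r j :=
  ⟨0, fun _ => r, j.zero_le, rfl, rfl, fun _ hl => absurd hl (Nat.not_lt_zero _)⟩

theorem reachSet_mono (r : V) : Monotone (reachSet D r) :=
  fun _ _ hjk _ ⟨k, w, hk, hw⟩ => ⟨k, w, hk.trans hjk, hw⟩

variable {D}

theorem mem_reachSet_succ_of_valid (hu : u ∈ reachSet D r j) (hx : D.Valid u x) :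
    x ∈ reachSet D r (j + 1) := by
  obtain ⟨k, w, hk, h0, rfl, hw⟩ := hu
  refine ⟨k + 1, fun l => if l ≤ k then w l else x, by omega, by simpa using h0, by simp, ?_⟩
  intro l hl
  rcases (Nat.le_of_lt_succ hl).lt_or_eq with h | rfl
  · simpa [h.le, Nat.succ_le_iff.mpr h] using hw l h
  · simpa using hx

theorem outDeg_le_of_mem_reachSet (hx : x ∈ reachSet D r j) :
    D.outDeg r ≤ D.outDeg x + j := by
  obtain ⟨k, w, hk, rfl, rfl, hw⟩ := hx
  have hprefix : ∀ l ≤ k, D.outDeg (w 0) ≤ D.outDeg (w l) + l := by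
    intro l hl
    induction l with
    | zero => rfl
    | succ l ih =>
      have hprev := ih (by omega)
      have hdrop := (hw l hl).2
      omega
  exact (hprefix k le_rfl).trans (Nat.add_le_add_left hk _)

theorem le_card_valid_of_mem_reachSet {γ : ℝ}
    (hinv : ∀ w, min (D.outDeg w : ℝ) γ ≤ #{x | D.Valid w x})
    (hr : γ + j ≤ D.outDeg r) (hu : u ∈ reachSet D r j) : γ ≤ #{x | D.Valid u x} := by
  have hdeg : (D.outDeg r : ℝ) ≤ D.outDeg u + j := by
    exact_mod_cast outDeg_le_of_mem_reachSet hu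
  exact (le_min (by linarith) le_rfl).trans (hinv u)

end Reachability

section Growth
variable [DecidableRel G.Adj]

theorem mul_card_reachSet_add_one_le (hE : G.edgeSet.Nonempty)
    (hvalid : ∀ u ∈ reachSet D r j, β * arboricity G ≤ #{x | D.Valid u x}) :
    β * Nat.card (reachSet D r j) + 1 ≤ Nat.card (reachSet D r (j + 1)) := by
  classical
  rw [Nat.card_eq_card_toFinset, Nat.card_eq_card_toFinset]
  refine D.mul_card_add_one_le_card hE ⟨r, by simpa using D.self_mem_reachSet r (j + 1)⟩
    (Set.toFinset_mono (D.reachSet_mono r j.le_succ)) fun u hu => ?_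
  have hu' : u ∈ reachSet D r j := Set.mem_toFinset.mp hu
  refine (hvalid u hu').trans (Nat.cast_le.mpr (card_le_card fun x hx => ?_))
  have hux : D.Valid u x := (mem_filter.mp hx).2
  exact mem_filter.mpr ⟨Set.mem_toFinset.mpr (mem_reachSet_succ_of_valid hu' hux), hux.1⟩

theorem geom_sum_le_card_reachSet (hE : G.edgeSet.Nonempty) (hβ : 0 ≤ β)
    (hvalid : ∀ k < j, ∀ u ∈ reachSet D r k, β * arboricity G ≤ #{x | D.Valid u x}) :
    ∑ k ∈ range (j + 1), β ^ k ≤ Nat.card (reachSet D r j) := by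
  induction j with
  | zero =>
    have : Nonempty (reachSet D r 0) := ⟨⟨r, D.self_mem_reachSet r 0⟩⟩
    rw [zero_add, geom_sum_one]
    exact_mod_cast Nat.card_pos (α := reachSet D r 0)
  | succ j ih =>
    calc ∑ k ∈ range (j + 1 + 1), β ^ k
        = β * ∑ k ∈ range (j + 1), β ^ k + 1 := geom_sum_succ
      _ ≤ β * Nat.card (reachSet D r j) + 1 := by
          gcongr
          exact ih fun k hk => hvalid k (hk.trans j.lt_succ_self)
      _ ≤ Nat.card (reachSet D r (j + 1)) :=
          D.mul_card_reachSet_add_one_le hE (hvalid j j.lt_succ_self)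

end Growth

end GraphOrientation

theorem reachSet_card_gt_general {V : Type*} [Fintype V] [DecidableEq V]
    (G : SimpleGraph V) [DecidableRel G.Adj] (hE : G.edgeSet.Nonempty)
    (β : ℝ) (hβ : 0 ≤ β) (D : GraphOrientation G)
    (hinv : ∀ w : V, min (D.outDeg w : ℝ) (β * arboricity G) ≤ #{x | D.Valid w x})
    (r : V) (j : ℕ) (hr : β * arboricity G + j ≤ D.outDeg r + 1) :
    ∑ k ∈ range (j + 1), β ^ k ≤ Nat.card (reachSet D r j) := by
  refine D.geom_sum_le_card_reachSet hE hβ fun k hk u hu =>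
    GraphOrientation.le_card_valid_of_mem_reachSet hinv ?_ hu
  have hkj : (k : ℝ) + 1 ≤ j := by exact_mod_cast hk
  linarith

/-- Under the invariant that each vertex `w` has at least
`min{d⁺(w), γ}` valid outgoing edges (`γ = β·α(G)`), if `d⁺(r) > γ + i`, then the set
`V_j` of vertices reachable from `r` by valid directed paths of length at most `j`
satisfies `|V_j| > β^j` for all `1 ≤ j ≤ i`. -/
theorem reachSet_card_gt {V : Type*} [Fintype V] [DecidableEq V]
    (G : SimpleGraph V) [DecidableRel G.Adj] (hE : G.edgeSet.Nonempty)
    (β : ℝ) (hβ : 1 < β) (D : GraphOrientation G)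
    (hinv : ∀ w : V,
      min (D.outDeg w : ℝ) (β * arboricity G) ≤
        ((Finset.univ.filter fun x => D.Valid w x).card : ℝ))
    (r : V) (i : ℕ) (hi : 1 ≤ i)
    (hr : β * arboricity G + i < (D.outDeg r : ℝ)) :
    ∀ j : ℕ, 1 ≤ j → j ≤ i → (β : ℝ) ^ j < (Nat.card (reachSet D r j) : ℝ) := by
  intro j hj hji
  have hdeg : β * arboricity G + j ≤ D.outDeg r + 1 := by
    linarith [(Nat.cast_le (α := ℝ)).mpr hji]
  exact (pow_lt_geom_sum (by linarith) (by omega)).trans_le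
    (reachSet_card_gt_general G hE β (by linarith) D hinv r j hdeg)
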